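/- Let F : ℂ → ℂ be complex-differentiable on an open set containing the closed unit disk and injective on the closed unit disk, set Ω := F(𝔻) where 𝔻 is the open unit disk, and let u : ℂ → ℂ be complex-differentiable on Ω, continuous on F(closed unit disk), and not identically zero on Ω. Then equality holds in the inequality ∫_𝔻 |u(F(z))|² |F'(z)|² dA(z) ≤ (1/2) · √(( ∫_𝔻 |F'(z)|² dA(z) ) / π) · ∫₀^{2π} |u(F(e^{iφ}))|² |F'(e^{iφ})| dφ if and only if u is constant on Ω and Ω is an open disk, i.e., there exist c ∈ ℂ and r > 0 with Ω = {z ∈ ℂ : |z − c| < r}. -/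

import Mathlib

open Real Set MeasureTheory

lemma aux_deriv_ne_zero {f : ℂ → ℂ} {z₀ : ℂ} {s : Set ℂ} (hs : s ∈ nhds z₀)
    (hf : AnalyticAt ℂ f z₀) (hinj : InjOn f s) : deriv f z₀ ≠ 0 := by
  intro hd
  have hF : AnalyticAt ℂ (fun z => f z - f z₀) z₀ := hf.sub analyticAt_const
  have hne : ¬ ∀ᶠ z in nhds z₀, f z - f z₀ = 0 := by
    intro h
    have h2 : ∀ᶠ z in nhdsWithin z₀ {z₀}ᶜ, z = z₀ := by
      have : ∀ᶠ z in nhds z₀, z = z₀ := by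
        filter_upwards [h, hs] with z hz hzs
        exact hinj hzs (mem_of_mem_nhds hs) (sub_eq_zero.mp hz)
      exact this.filter_mono nhdsWithin_le_nhds
    obtain ⟨z, hz1, hz2⟩ := (h2.and self_mem_nhdsWithin).exists
    exact hz2 hz1
  have hord : analyticOrderAt (fun z => f z - f z₀) z₀ ≠ ⊤ := by
    rwa [Ne, analyticOrderAt_eq_top]
  obtain ⟨n, hn⟩ := ENat.ne_top_iff_exists.mp hord
  obtain ⟨g, hg, hg0, hfg⟩ := (hF.analyticOrderAt_eq_natCast (n := n)).mp hn.symm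
  have hn0 : n ≠ 0 := by
    rintro rfl
    have := hfg.self_of_nhds
    simp at this
    exact hg0 this.symm
  have hn1 : n ≠ 1 := by
    rintro rfl
    have h1 : HasDerivAt (fun z => f z - f z₀) (g z₀) z₀ := by
      have h2 : HasDerivAt (fun z => (z - z₀) ^ 1 • g z) (g z₀) z₀ := by
        have := ((hasDerivAt_id z₀).sub_const z₀).mul hg.differentiableAt.hasDerivAt
        simp at this ⊢
        exact this
      exact h2.congr_of_eventuallyEq hfg
    have h3 := (hf.differentiableAt.hasDerivAt.sub_const (f z₀)).unique h1
    exact hg0 (h3 ▸ hd)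
  obtain ⟨b, hb⟩ := IsAlgClosed.exists_pow_nat_eq (g z₀) (Nat.pos_of_ne_zero hn0)
  have hb0 : b ≠ 0 := by
    rintro rfl
    rw [zero_pow hn0] at hb
    exact hg0 hb.symm
  let ψ : ℂ → ℂ := fun z => b * Complex.exp (Complex.log (g z / g z₀) / n)
  have hψ : AnalyticAt ℂ ψ z₀ := by
    refine analyticAt_const.mul (AnalyticAt.cexp ?_)
    refine AnalyticAt.div (AnalyticAt.clog (hg.div analyticAt_const hg0) ?_) analyticAt_const
      (by exact_mod_cast hn0)
    simp [hg0]
  let φ : ℂ → ℂ := fun z => (z - z₀) * ψ z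
  have hφ : AnalyticAt ℂ φ z₀ := (analyticAt_id.sub analyticAt_const).mul hψ
  have hψ0 : ψ z₀ = b := by simp [ψ, hg0]
  have hφd : HasDerivAt φ b z₀ := by
    have := ((hasDerivAt_id z₀).sub_const z₀).mul hψ.differentiableAt.hasDerivAt
    simp [hψ0] at this
    exact this
  have hstr : HasStrictDerivAt φ b z₀ := by
    have := hφ.hasStrictDerivAt
    rwa [hφd.deriv] at this
  have hmap := hstr.map_nhds_eq hb0
  have hφ0 : φ z₀ = 0 := by simp [φ]
  rw [hφ0] at hmap
  have hgne : ∀ᶠ z in nhds z₀, g z ≠ 0 := hg.continuousAt.eventually_ne hg0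
  have hN : {z | z ∈ s ∧ f z - f z₀ = (φ z) ^ n} ∈ nhds z₀ := by
    filter_upwards [hs, hfg, hgne] with z h1 h2 h3
    refine ⟨h1, ?_⟩
    rw [h2]
    simp only [φ, ψ, mul_pow, smul_eq_mul, hb, ← Complex.exp_nat_mul]
    rw [mul_div_cancel₀ _ (by exact_mod_cast hn0 : (n:ℂ) ≠ 0),
      Complex.exp_log (div_ne_zero h3 hg0), mul_div_cancel₀ _ hg0]
  have hI : φ '' {z | z ∈ s ∧ f z - f z₀ = (φ z) ^ n} ∈ nhds (0:ℂ) := by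
    rw [← hmap]; exact Filter.image_mem_map hN
  have hω := Complex.isPrimitiveRoot_exp n hn0
  set ω := Complex.exp (2 * π * Complex.I / n) with hωdef
  have hω1 : ω ≠ 1 := hω.ne_one (by omega)
  have hI2 : ∀ᶠ y in nhds (0:ℂ), ω * y ∈ φ '' {z | z ∈ s ∧ f z - f z₀ = (φ z) ^ n} := by
    have : Filter.Tendsto (fun y => ω * y) (nhds 0) (nhds 0) := by
      have : Continuous (fun y => ω * y) := by fun_prop
      simpa using this.tendsto 0
    exact this hI
  have hI3 := (Filter.Eventually.filter_mono nhdsWithin_le_nhds ((Filter.Eventually.and hI hI2))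
    : ∀ᶠ y in nhdsWithin (0:ℂ) {0}ᶜ, _)
  obtain ⟨y, ⟨⟨z1, hz1, h1⟩, ⟨z2, hz2, h2⟩⟩, hy⟩ := (hI3.and self_mem_nhdsWithin).exists
  have : z1 = z2 := by
    apply hinj hz1.1 hz2.1
    have e1 := hz1.2
    have e2 := hz2.2
    rw [h1] at e1
    rw [h2, mul_pow, hω.pow_eq_one, one_mul] at e2
    exact sub_left_inj.mp (e1.trans e2.symm)
  subst this
  rw [h1] at h2
  exact hω1 ((mul_eq_right₀ hy).mp h2.symm)

lemma aux_sqrt {h : ℂ → ℂ} (hh : DifferentiableOn ℂ h (Metric.ball 0 1))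
    (h0 : ∀ z ∈ Metric.ball (0:ℂ) 1, h z ≠ 0) :
    ∃ f : ℂ → ℂ, DifferentiableOn ℂ f (Metric.ball 0 1) ∧
      ∀ z ∈ Metric.ball (0:ℂ) 1, f z ^ 2 = h z := by
  have hd : DifferentiableOn ℂ (fun z => deriv h z / h z) (Metric.ball 0 1) :=
    (hh.deriv Metric.isOpen_ball).div hh h0
  obtain ⟨L, hL0, hL⟩ := hd.isExactOn_ball.with_val_at 0 (Complex.log (h 0))
  have h00 : h 0 ≠ 0 := h0 0 (by simp)
  have key : ∀ z ∈ Metric.ball (0:ℂ) 1, h z * Complex.exp (- L z) = 1 := by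
    have hder : ∀ z ∈ Metric.ball (0:ℂ) 1, HasDerivAt (fun z => h z * Complex.exp (- L z)) 0 z := by
      intro z hz
      have h1 := (hh.differentiableAt (Metric.isOpen_ball.mem_nhds hz)).hasDerivAt
      have h2 := h1.mul (hL z hz).neg.cexp
      have e : deriv h z * Complex.exp ((-L) z) + h z * (Complex.exp ((-L) z) * -(deriv h z / h z)) = 0 := by
        have := h0 z hz
        field_simp
        ring
      rw [e] at h2
      exact h2
    intro z hz
    have := (convex_ball (0:ℂ) 1).is_const_of_fderivWithin_eq_zero (𝕜 := ℂ)
      (f := fun z => h z * Complex.exp (- L z))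
      (fun z hz => (hder z hz).differentiableAt.differentiableWithinAt) (fun z hz => by
        rw [fderivWithin_of_isOpen Metric.isOpen_ball hz, (hder z hz).hasFDerivAt.fderiv]
        ext; simp) hz (Metric.mem_ball_self one_pos)
    rw [this, hL0, Complex.exp_neg, Complex.exp_log h00, mul_inv_cancel₀ h00]
  refine ⟨fun z => Complex.exp (L z / 2), fun z hz => ?_, fun z hz => ?_⟩
  · exact ((hL z hz).div_const 2).cexp.differentiableAt.differentiableWithinAt
  · rw [← Complex.exp_nat_mul]
    push_cast
    rw [mul_div_cancel₀ _ (two_ne_zero)]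
    have := key z hz
    rw [Complex.exp_neg] at this
    exact (eq_of_div_eq_one (by simpa [div_eq_mul_inv] using this)).symm

lemma aux_parseval {b : ℕ → ℂ} (hb : Summable (fun n => ‖b n‖)) :
    HasSum (fun n => ‖b n‖ ^ 2)
      ((2 * π)⁻¹ * ∫ φ in (0:ℝ)..(2 * π), ‖∑' n, b n * Complex.exp (φ * Complex.I) ^ n‖ ^ 2) := by
  rw [hasSum_iff_tendsto_nat_of_nonneg (fun n => by positivity)]
  have hpoly : ∀ N : ℕ, ∑ i ∈ Finset.range N, ‖b i‖ ^ 2 = (2 * π)⁻¹ *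
      ∫ φ in (0:ℝ)..(2 * π), ‖∑ n ∈ Finset.range N, b n * Complex.exp (φ * Complex.I) ^ n‖ ^ 2 := by
    intro N
    let p : Polynomial ℂ := ∑ n ∈ Finset.range N, Polynomial.monomial n (b n)
    have hc : ∀ i, p.coeff i = if i < N then b i else 0 := by
      intro i
      simp [p, Polynomial.coeff_monomial]
    have h := p.sum_sq_norm_coeff_eq_circleAverage
    have h1 : ∑ i ∈ p.support, ‖p.coeff i‖ ^ 2 = ∑ i ∈ Finset.range N, ‖b i‖ ^ 2 := by
      rw [Finset.sum_subset (s₂ := Finset.range N)]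
      · refine Finset.sum_congr rfl fun i hi => ?_
        rw [hc, if_pos (Finset.mem_range.mp hi)]
      · intro i hi
        rw [Polynomial.mem_support_iff, hc] at hi
        by_contra hcon
        simp at hcon
        simp [hcon.not_gt] at hi
      · intro i _ hi
        rw [Polynomial.notMem_support_iff] at hi
        simp [hi]
    rw [← h1, h, Real.circleAverage, smul_eq_mul]
    congr 2
    ext φ
    simp [p, circleMap, Polynomial.eval_finsetSum]
  simp_rw [hpoly]
  refine Filter.Tendsto.const_mul _ ?_
  have hn : ∀ (φ : ℝ) n, ‖b n * Complex.exp (φ * Complex.I) ^ n‖ = ‖b n‖ := by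
    intro φ n; simp [Complex.norm_exp_ofReal_mul_I]
  refine intervalIntegral.tendsto_integral_filter_of_dominated_convergence
    (fun _ => (∑' n, ‖b n‖) ^ 2) ?_ ?_ ?_ ?_
  · refine Filter.Eventually.of_forall fun N => Continuous.aestronglyMeasurable (by fun_prop)
  · refine Filter.Eventually.of_forall fun N => Filter.Eventually.of_forall fun φ _ => ?_
    rw [Real.norm_of_nonneg (by positivity)]
    gcongr
    refine (norm_sum_le _ _).trans ?_
    simp_rw [hn]
    exact hb.sum_le_tsum _ (fun _ _ => norm_nonneg _)
  · simp
  · refine Filter.Eventually.of_forall fun φ _ => ?_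
    have hs : Summable (fun n => b n * Complex.exp (φ * Complex.I) ^ n) := by
      apply Summable.of_norm
      simpa only [hn] using hb
    exact (hs.hasSum.tendsto_sum_nat.norm).pow 2

lemma aux_summable {f : ℂ → ℂ} {a : ℕ → ℂ}
    (ha : ∀ z ∈ Metric.ball (0:ℂ) 1, HasSum (fun n => a n * z ^ n) (f z)) {R : ℝ} (hR0 : 0 ≤ R)
    (hR : R < 1) : Summable (fun n => ‖a n * (R:ℂ) ^ n‖) :=
  (ha R (by simpa [abs_of_nonneg hR0] using hR)).summable.norm

lemma aux_parseval_R {f : ℂ → ℂ} {a : ℕ → ℂ}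
    (ha : ∀ z ∈ Metric.ball (0:ℂ) 1, HasSum (fun n => a n * z ^ n) (f z)) {R : ℝ} (hR0 : 0 ≤ R)
    (hR : R < 1) :
    HasSum (fun n => ‖a n‖ ^ 2 * R ^ (2 * n))
      ((2 * π)⁻¹ * ∫ φ in (0:ℝ)..(2 * π), ‖f (R * Complex.exp (φ * Complex.I))‖ ^ 2) := by
  have h := aux_parseval (aux_summable ha hR0 hR)
  convert h using 1
  · ext n
    simp [abs_of_nonneg hR0, mul_pow, pow_mul, pow_right_comm]
  · congr 2
    ext φ
    congr 2
    have := ha (R * Complex.exp (φ * Complex.I)) (by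
      simpa [abs_of_nonneg hR0, Complex.norm_exp_ofReal_mul_I] using hR)
    rw [← this.tsum_eq]
    congr 1; ext n; ring

lemma aux_taylor {f : ℂ → ℂ} (hf : DifferentiableOn ℂ f (Metric.ball 0 1)) :
    ∃ a : ℕ → ℂ, ∀ z ∈ Metric.ball (0:ℂ) 1, HasSum (fun n => a n * z ^ n) (f z) := by
  refine ⟨fun n => (n.factorial : ℂ)⁻¹ * iteratedDeriv n f 0, fun z hz => ?_⟩
  have h := Complex.hasSum_taylorSeries_on_ball (r := 1) hf hz
  have e : (fun n : ℕ => (n.factorial : ℂ)⁻¹ * iteratedDeriv n f 0 * z ^ n) =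
      fun n : ℕ => (n.factorial : ℂ)⁻¹ • (z - 0) ^ n • iteratedDeriv n f 0 := by
    funext n; simp only [smul_eq_mul, sub_zero]; ring
  rw [e]; exact h

/-- boundary version -/
lemma aux_boundary {f : ℂ → ℂ} {a : ℕ → ℂ}
    (ha : ∀ z ∈ Metric.ball (0:ℂ) 1, HasSum (fun n => a n * z ^ n) (f z))
    {K : ℂ → ℝ} (hK : ContinuousOn K (Metric.closedBall 0 1))
    (hKf : ∀ z ∈ Metric.ball (0:ℂ) 1, ‖f z‖ ^ 2 = K z) :
    HasSum (fun n => ‖a n‖ ^ 2)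
      ((2 * π)⁻¹ * ∫ φ in (0:ℝ)..(2 * π), K (Complex.exp (φ * Complex.I))) := by
  obtain ⟨C, hC⟩ := (isCompact_closedBall (0:ℂ) 1).exists_bound_of_continuousOn hK
  have hmem : ∀ (R φ : ℝ), 0 ≤ R → R ≤ 1 →
      (R * Complex.exp (φ * Complex.I) : ℂ) ∈ Metric.closedBall (0:ℂ) 1 := by
    intro R φ h0 h1
    simpa [abs_of_nonneg h0, Complex.norm_exp_ofReal_mul_I] using h1
  have hKc : ∀ R : ℝ, 0 ≤ R → R ≤ 1 → Continuous (fun φ : ℝ => K (R * Complex.exp (φ * Complex.I))) := by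
    intro R h0 h1
    exact hK.comp_continuous (by fun_prop) (fun φ => hmem R φ h0 h1)
  have hIoo : ∀ᶠ R : ℝ in nhdsWithin 1 (Iio 1), R ∈ Ioo (0:ℝ) 1 := 
    Ioo_mem_nhdsLT one_pos
  have hlim : Filter.Tendsto (fun R : ℝ => ∫ φ in (0:ℝ)..(2 * π), K (R * Complex.exp (φ * Complex.I)))
      (nhdsWithin 1 (Iio 1)) (nhds (∫ φ in (0:ℝ)..(2 * π), K (Complex.exp (φ * Complex.I)))) := by
    refine intervalIntegral.tendsto_integral_filter_of_dominated_convergence (fun _ => C) ?_ ?_ ?_ ?_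
    · filter_upwards [hIoo] with R hR
      exact (hKc R hR.1.le hR.2.le).aestronglyMeasurable
    · filter_upwards [hIoo] with R hR
      refine Filter.Eventually.of_forall fun φ _ => hC _ (hmem R φ hR.1.le hR.2.le)
    · simp
    · refine Filter.Eventually.of_forall fun φ _ => ?_
      have h1 : ContinuousWithinAt K (Metric.closedBall 0 1) (Complex.exp (φ * Complex.I)) :=
        hK _ (by simp)
      refine h1.tendsto.comp ?_
      rw [tendsto_nhdsWithin_iff]
      constructor
      · have : Continuous (fun R : ℝ => (R * Complex.exp (φ * Complex.I) : ℂ)) := by fun_prop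
        have := this.tendsto 1
        simp only [Complex.ofReal_one, one_mul] at this
        exact this.mono_left nhdsWithin_le_nhds
      · filter_upwards [hIoo] with R hR
        exact hmem R φ hR.1.le hR.2.le
  set J := ∫ φ in (0:ℝ)..(2 * π), K (Complex.exp (φ * Complex.I)) with hJ
  have hsum : ∀ R ∈ Ioo (0:ℝ) 1, HasSum (fun n => ‖a n‖ ^ 2 * R ^ (2 * n))
      ((2 * π)⁻¹ * ∫ φ in (0:ℝ)..(2 * π), K (R * Complex.exp (φ * Complex.I))) := by
    intro R hR
    have := aux_parseval_R ha hR.1.le hR.2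
    convert this using 4 with φ
    rw [hKf]
    simpa [abs_of_nonneg hR.1.le, Complex.norm_exp_ofReal_mul_I] using hR.2
  have hlim' := hlim.const_mul (2 * π)⁻¹
  -- partial sums bounded
  have hle : ∀ s : Finset ℕ, ∑ n ∈ s, ‖a n‖ ^ 2 ≤ (2 * π)⁻¹ * J := by
    intro s
    have h1 : Filter.Tendsto (fun R : ℝ => ∑ n ∈ s, ‖a n‖ ^ 2 * R ^ (2 * n)) (nhdsWithin 1 (Iio 1))
        (nhds (∑ n ∈ s, ‖a n‖ ^ 2)) := by
      have : Continuous (fun R : ℝ => ∑ n ∈ s, ‖a n‖ ^ 2 * R ^ (2 * n)) := by fun_prop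
      have := this.tendsto 1
      simp only [one_pow, mul_one] at this
      exact this.mono_left nhdsWithin_le_nhds
    refine le_of_tendsto_of_tendsto h1 hlim' ?_
    filter_upwards [hIoo] with R hR
    exact sum_le_hasSum _ (fun n _ => by have := hR.1; positivity) (hsum R hR)
  have hS : Summable (fun n => ‖a n‖ ^ 2) :=
    summable_of_sum_le (fun _ => by positivity) hle
  have heq : ∑' n, ‖a n‖ ^ 2 = (2 * π)⁻¹ * J := by
    apply le_antisymm (hS.tsum_le_of_sum_le hle)
    refine le_of_tendsto hlim' ?_
    filter_upwards [hIoo] with R hR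
    refine hasSum_le (fun n => ?_) (hsum R hR) hS.hasSum
    exact mul_le_of_le_one_right (by positivity) (pow_le_one₀ hR.1.le hR.2.le)
  rw [← heq]
  exact hS.hasSum

lemma aux_area {f : ℂ → ℂ} {a : ℕ → ℂ} (hfc : ContinuousOn f (Metric.ball 0 1))
    (ha : ∀ z ∈ Metric.ball (0:ℂ) 1, HasSum (fun n => a n * z ^ n) (f z))
    (hint : IntegrableOn (fun z => ‖f z‖ ^ 2) (Metric.ball 0 1)) :
    HasSum (fun n : ℕ => π * (‖a n‖ ^ 2 / (n + 1))) (∫ z in Metric.ball (0:ℂ) 1, ‖f z‖ ^ 2) := by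
  set g : ℂ → ENNReal := (Metric.ball (0:ℂ) 1).indicator (fun z => ENNReal.ofReal (‖f z‖ ^ 2)) with hg
  have hgm : Measurable g := by
    classical
    have hc : ContinuousOn (fun z => ENNReal.ofReal (‖f z‖ ^ 2)) (Metric.ball (0:ℂ) 1) :=
      ENNReal.continuous_ofReal.comp_continuousOn (hfc.norm.pow 2)
    rw [hg, ← Set.piecewise_eq_indicator]
    exact hc.measurable_piecewise continuousOn_const measurableSet_ball
  have h1 : ENNReal.ofReal (∫ z in Metric.ball (0:ℂ) 1, ‖f z‖ ^ 2) = ∫⁻ z, g z := by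
    rw [ofReal_integral_eq_lintegral_ofReal hint (Filter.Eventually.of_forall fun z => by positivity)]
    rw [hg, lintegral_indicator measurableSet_ball]
  have hinner : ∀ r ∈ Ioi (0:ℝ), (∫⁻ θ in Ioo (-π) π, ENNReal.ofReal r * g (r * Complex.exp (θ * Complex.I))) =
      (Ioo (0:ℝ) 1).indicator (fun r => ∑' n : ℕ, ENNReal.ofReal (2 * π * ‖a n‖ ^ 2 * r ^ (2 * n + 1))) r := by
    intro r hr
    have hr0 : (0:ℝ) < r := hr
    by_cases hr1 : r < 1
    · have hmem : ∀ θ : ℝ, (r * Complex.exp (θ * Complex.I) : ℂ) ∈ Metric.ball (0:ℂ) 1 := by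
        intro θ
        simpa [abs_of_pos hr0, Complex.norm_exp_ofReal_mul_I] using hr1
      rw [indicator_of_mem (by exact ⟨hr0, hr1⟩)]
      have hcont : Continuous (fun θ : ℝ => ‖f (r * Complex.exp (θ * Complex.I))‖ ^ 2) :=
        (hfc.norm.pow 2).comp_continuous (by fun_prop) hmem
      have e1 : ∀ θ : ℝ, ENNReal.ofReal r * g (r * Complex.exp (θ * Complex.I)) =
          ENNReal.ofReal (r * ‖f (r * Complex.exp (θ * Complex.I))‖ ^ 2) := by
        intro θ
        rw [hg, indicator_of_mem (hmem θ), ENNReal.ofReal_mul hr0.le]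
      simp_rw [e1]
      have hcont2 : Continuous (fun θ : ℝ => r * ‖f (r * Complex.exp (θ * Complex.I))‖ ^ 2) :=
        continuous_const.mul hcont
      rw [← ofReal_integral_eq_lintegral_ofReal
        ((hcont2.integrableOn_Icc).mono_set Ioo_subset_Icc_self)
        (Filter.Eventually.of_forall fun z => by positivity)]
      rw [← integral_Ioc_eq_integral_Ioo, ← intervalIntegral.integral_of_le (by linarith [pi_pos]),
        intervalIntegral.integral_const_mul]
      have hper : Function.Periodic (fun θ : ℝ => ‖f (r * Complex.exp (θ * Complex.I))‖ ^ 2) (2 * π) := by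
        intro θ
        have : Complex.exp (((θ + 2 * π : ℝ) : ℂ) * Complex.I) = Complex.exp (θ * Complex.I) := by
          push_cast
          rw [add_mul]
          exact Complex.exp_periodic _
        simp only [this]
      have := hper.intervalIntegral_add_eq (-π) 0
      rw [show -π + 2 * π = π by ring, zero_add] at this
      rw [this]
      have hs := ((aux_parseval_R ha hr0.le hr1).mul_left (2 * π * r))
      have e2 : 2 * π * r * ((2 * π)⁻¹ * ∫ φ in (0:ℝ)..(2 * π), ‖f (r * Complex.exp (φ * Complex.I))‖ ^ 2)
          = r * ∫ φ in (0:ℝ)..(2 * π), ‖f (r * Complex.exp (φ * Complex.I))‖ ^ 2 := by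
        have := pi_pos.ne'
        generalize (∫ φ in (0:ℝ)..(2 * π), ‖f (r * Complex.exp (φ * Complex.I))‖ ^ 2) = J
        field_simp
      rw [e2] at hs
      rw [← hs.tsum_eq, ENNReal.ofReal_tsum_of_nonneg (fun n => by positivity) hs.summable]
      congr 1; ext n; congr 1; ring
    · rw [indicator_of_notMem (fun h => hr1 h.2)]
      have e1 : ∀ θ : ℝ, g (r * Complex.exp (θ * Complex.I)) = 0 := by
        intro θ
        rw [hg, indicator_of_notMem]
        simpa [abs_of_pos hr0, Complex.norm_exp_ofReal_mul_I] using hr1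
      simp [e1]
  have h2 : ∫⁻ z, g z = ∑' n : ℕ, ENNReal.ofReal (π * (‖a n‖ ^ 2 / (n + 1))) := by
    rw [← Complex.lintegral_comp_polarCoord_symm, polarCoord_target,
      Measure.volume_eq_prod, setLIntegral_prod]
    · have e3 : ∀ p : ℝ × ℝ, Complex.polarCoord.symm p = p.1 * Complex.exp (p.2 * Complex.I) := by
        intro p
        rw [Complex.polarCoord_symm_apply, Complex.exp_mul_I]
        simp
      simp_rw [e3, smul_eq_mul]
      rw [setLIntegral_congr_fun measurableSet_Ioi hinner, setLIntegral_indicator measurableSet_Ioo]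
      rw [show Ioo (0:ℝ) 1 ∩ Ioi 0 = Ioo 0 1 from inter_eq_left.mpr (fun x hx => hx.1)]
      rw [lintegral_tsum (fun n => by fun_prop)]
      congr 1; ext n
      rw [← ofReal_integral_eq_lintegral_ofReal]
      · rw [← integral_Ioc_eq_integral_Ioo, ← intervalIntegral.integral_of_le zero_le_one,
          intervalIntegral.integral_const_mul, integral_pow]
        congr 1
        push_cast
        have : (n:ℝ) + 1 ≠ 0 := by positivity
        field_simp
        ring
      · exact (Continuous.integrableOn_Icc (by fun_prop)).mono_set Ioo_subset_Icc_self
      · filter_upwards [self_mem_ae_restrict measurableSet_Ioo] with r hr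
        have := hr.1
        simp only [Pi.zero_apply]
        positivity
    · have hm : Measurable (fun p : ℝ × ℝ => Complex.polarCoord.symm p) := by
        simp_rw [Complex.polarCoord_symm_apply]
        fun_prop
      refine Measurable.aemeasurable ?_
      simp only [smul_eq_mul]
      exact (by fun_prop : Measurable fun p : ℝ × ℝ => ENNReal.ofReal p.1).mul (hgm.comp hm)
  have h3 := h1.trans h2
  have h4 := ENNReal.hasSum_toReal (f := fun n : ℕ => ENNReal.ofReal (π * (‖a n‖ ^ 2 / (n + 1))))
    (by rw [← h3]; exact ENNReal.ofReal_ne_top)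
  rw [← ENNReal.tsum_toReal_eq (fun n => ENNReal.ofReal_ne_top), ← h3,
    ENNReal.toReal_ofReal (integral_nonneg fun z => by positivity)] at h4
  convert h4 using 2 with n
  rw [ENNReal.toReal_ofReal (by positivity)]

lemma aux_var {ι : Type*} (s : Finset ι) (b : ι → ℂ) (hs : s.card ≠ 0) :
    ∑ i ∈ s, ‖b i - (∑ j ∈ s, b j) / s.card‖ ^ 2 =
      ∑ i ∈ s, ‖b i‖ ^ 2 - ‖∑ i ∈ s, b i‖ ^ 2 / s.card := by
  set μ : ℂ := (∑ j ∈ s, b j) / s.card with hμ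
  have hc : (s.card : ℂ) ≠ 0 := by exact_mod_cast hs
  have hcr : (s.card : ℝ) ≠ 0 := by exact_mod_cast hs
  have hsum : ∑ j ∈ s, b j = s.card * μ := by rw [hμ]; field_simp
  have h1 : ∀ i, ‖b i - μ‖ ^ 2 = ‖b i‖ ^ 2 - 2 * (b i * (starRingEnd ℂ) μ).re + ‖μ‖ ^ 2 := by
    intro i
    simp only [← Complex.normSq_eq_norm_sq, Complex.normSq_apply]
    simp
    ring
  simp_rw [h1]
  rw [Finset.sum_add_distrib, Finset.sum_sub_distrib, ← Finset.mul_sum, ← Complex.re_sum,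
    ← Finset.sum_mul, hsum]
  rw [mul_assoc, Complex.mul_conj, Complex.normSq_eq_norm_sq]
  simp only [Finset.sum_const, nsmul_eq_mul, norm_mul, Complex.norm_natCast]
  rw [← Complex.ofReal_natCast, ← Complex.ofReal_mul, Complex.ofReal_re]
  field_simp
  ring

lemma aux_sq_series {f : ℂ → ℂ} {a : ℕ → ℂ}
    (ha : ∀ z ∈ Metric.ball (0:ℂ) 1, HasSum (fun n => a n * z ^ n) (f z)) :
    ∀ z ∈ Metric.ball (0:ℂ) 1,
      HasSum (fun n => (∑ p ∈ Finset.HasAntidiagonal.antidiagonal n, a p.1 * a p.2) * z ^ n) (f z ^ 2) := by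
  intro z hz
  have hs := (ha z hz).summable.norm
  have h1 := tsum_mul_tsum_eq_tsum_sum_antidiagonal_of_summable_norm hs hs
  have h2 := (summable_norm_sum_mul_antidiagonal_of_summable_norm hs hs).of_norm
  rw [(ha z hz).tsum_eq, ← pow_two] at h1
  rw [h1]
  have e : (fun n => (∑ p ∈ Finset.HasAntidiagonal.antidiagonal n, a p.1 * a p.2) * z ^ n) =
      fun n => ∑ kl ∈ Finset.HasAntidiagonal.antidiagonal n, a kl.1 * z ^ kl.1 * (a kl.2 * z ^ kl.2) := by
    funext n
    rw [Finset.sum_mul]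
    refine Finset.sum_congr rfl fun p hp => ?_
    rw [← Finset.HasAntidiagonal.mem_antidiagonal.mp hp, pow_add]
    ring
  rw [e]
  exact h2.hasSum

lemma aux_carleman {f : ℂ → ℂ} {a : ℕ → ℂ} (hfc : ContinuousOn f (Metric.ball 0 1))
    (ha : ∀ z ∈ Metric.ball (0:ℂ) 1, HasSum (fun n => a n * z ^ n) (f z))
    (hint : IntegrableOn (fun z => ‖f z ^ 2‖ ^ 2) (Metric.ball 0 1))
    {S : ℝ} (hS : HasSum (fun n => ‖a n‖ ^ 2) S) :
    HasSum (fun n : ℕ => π * ∑ p ∈ Finset.HasAntidiagonal.antidiagonal n, ‖a p.1 * a p.2 -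
        (∑ p ∈ Finset.HasAntidiagonal.antidiagonal n, a p.1 * a p.2) / ((n + 1 : ℕ) : ℂ)‖ ^ 2)
      (π * S ^ 2 - ∫ z in Metric.ball (0:ℂ) 1, ‖f z ^ 2‖ ^ 2) := by
  have h1 := aux_area (f := fun z => f z ^ 2) (hfc.pow 2) (aux_sq_series ha) hint
  have hsn : Summable (fun n => ‖‖a n‖ ^ 2‖) := hS.summable.norm
  have h2 := tsum_mul_tsum_eq_tsum_sum_antidiagonal_of_summable_norm hsn hsn
  have h3 := (summable_norm_sum_mul_antidiagonal_of_summable_norm hsn hsn).of_norm.hasSum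
  rw [← h2, hS.tsum_eq, ← pow_two] at h3
  have h4 := (h3.mul_left π).sub h1
  have e : (fun n : ℕ => π * ∑ p ∈ Finset.HasAntidiagonal.antidiagonal n, ‖a p.1 * a p.2 -
        (∑ p ∈ Finset.HasAntidiagonal.antidiagonal n, a p.1 * a p.2) / ((n + 1 : ℕ) : ℂ)‖ ^ 2) =
      fun n : ℕ => π * ∑ kl ∈ Finset.HasAntidiagonal.antidiagonal n, ‖a kl.1‖ ^ 2 * ‖a kl.2‖ ^ 2 -
        π * (‖∑ p ∈ Finset.HasAntidiagonal.antidiagonal n, a p.1 * a p.2‖ ^ 2 / (n + 1)) := by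
    funext n
    have := aux_var (Finset.HasAntidiagonal.antidiagonal n) (fun p => a p.1 * a p.2) (by simp)
    rw [Finset.Nat.card_antidiagonal] at this
    rw [this, mul_sub]
    simp [mul_pow]
  rw [e]
  exact h4

lemma aux_carleman_le {f : ℂ → ℂ} {a : ℕ → ℂ} (hfc : ContinuousOn f (Metric.ball 0 1))
    (ha : ∀ z ∈ Metric.ball (0:ℂ) 1, HasSum (fun n => a n * z ^ n) (f z))
    (hint : IntegrableOn (fun z => ‖f z ^ 2‖ ^ 2) (Metric.ball 0 1))
    {S : ℝ} (hS : HasSum (fun n => ‖a n‖ ^ 2) S) :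
    ∫ z in Metric.ball (0:ℂ) 1, ‖f z ^ 2‖ ^ 2 ≤ π * S ^ 2 := by
  have := (aux_carleman hfc ha hint hS).nonneg (fun n => by positivity)
  linarith

lemma aux_carleman_eq {f : ℂ → ℂ} {a : ℕ → ℂ} (hfc : ContinuousOn f (Metric.ball 0 1))
    (ha : ∀ z ∈ Metric.ball (0:ℂ) 1, HasSum (fun n => a n * z ^ n) (f z))
    (hint : IntegrableOn (fun z => ‖f z ^ 2‖ ^ 2) (Metric.ball 0 1))
    {S : ℝ} (hS : HasSum (fun n => ‖a n‖ ^ 2) S) 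
    (heq : ∫ z in Metric.ball (0:ℂ) 1, ‖f z ^ 2‖ ^ 2 = π * S ^ 2) (n : ℕ) :
    a 0 * a (n + 1) = a 1 * a n := by
  have h := aux_carleman hfc ha hint hS
  rw [heq, sub_self, hasSum_zero_iff_of_nonneg (fun n => by positivity)] at h
  have h1 := congrFun h (n + 1)
  simp only [Pi.zero_apply, mul_eq_zero, pi_pos.ne', false_or] at h1
  rw [Finset.sum_eq_zero_iff_of_nonneg (fun _ _ => by positivity)] at h1
  have e1 := h1 (0, n + 1) (by simp)
  have e2 := h1 (1, n) (by simp [add_comm])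
  simp only [ne_eq, OfNat.ofNat_ne_zero, not_false_eq_true, pow_eq_zero_iff, norm_eq_zero,
    sub_eq_zero] at e1 e2
  rw [e1, e2]

lemma aux_carleman_geom {f : ℂ → ℂ} {κ q : ℂ} (hfc : ContinuousOn f (Metric.ball 0 1))
    (ha : ∀ z ∈ Metric.ball (0:ℂ) 1, HasSum (fun n => κ * q ^ n * z ^ n) (f z))
    (hint : IntegrableOn (fun z => ‖f z ^ 2‖ ^ 2) (Metric.ball 0 1))
    {S : ℝ} (hS : HasSum (fun n : ℕ => ‖κ * q ^ n‖ ^ 2) S) :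
    ∫ z in Metric.ball (0:ℂ) 1, ‖f z ^ 2‖ ^ 2 = π * S ^ 2 := by
  have h := aux_carleman hfc ha hint hS
  have e : (fun n : ℕ => π * ∑ p ∈ Finset.HasAntidiagonal.antidiagonal n, ‖κ * q ^ p.1 * (κ * q ^ p.2) -
        (∑ p ∈ Finset.HasAntidiagonal.antidiagonal n, κ * q ^ p.1 * (κ * q ^ p.2)) / ((n + 1 : ℕ) : ℂ)‖ ^ 2) = 
        fun _ => 0 := by
    funext n
    have h1 : ∀ p ∈ Finset.HasAntidiagonal.antidiagonal n, κ * q ^ p.1 * (κ * q ^ p.2) = κ ^ 2 * q ^ n := by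
      intro p hp
      rw [← Finset.HasAntidiagonal.mem_antidiagonal.mp hp, pow_add]
      ring
    have h2 : (∑ p ∈ Finset.HasAntidiagonal.antidiagonal n, κ * q ^ p.1 * (κ * q ^ p.2)) / ((n + 1 : ℕ) : ℂ) = 
        κ ^ 2 * q ^ n := by
      rw [Finset.sum_congr rfl h1, Finset.sum_const, Finset.Nat.card_antidiagonal, nsmul_eq_mul]
      have : ((n + 1 : ℕ) : ℂ) ≠ 0 := by exact_mod_cast n.succ_ne_zero
      field_simp
    rw [Finset.sum_eq_zero, mul_zero]
    intro p hp
    rw [h1 p hp, h2]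
    simp
  rw [e] at h
  have := h.unique hasSum_zero
  linarith

lemma aux_normSq_id (q z : ℂ) :
    ‖1 - q * z‖ ^ 2 - ‖z - (starRingEnd ℂ) q‖ ^ 2 = (1 - ‖z‖ ^ 2) * (1 - ‖q‖ ^ 2) := by
  simp only [← Complex.normSq_eq_norm_sq, Complex.normSq_apply]
  simp
  ring

lemma aux_one_sub_ne {q z : ℂ} (hq : ‖q‖ < 1) (hz : ‖z‖ ≤ 1) : 1 - q * z ≠ 0 := by
  intro h
  have h1 : ‖q * z‖ = 1 := by rw [← sub_eq_zero.mp h]; simp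
  rw [norm_mul] at h1
  nlinarith [norm_nonneg q, norm_nonneg z]

lemma aux_mob_lt {q z : ℂ} (hq : ‖q‖ < 1) (hz : ‖z‖ < 1) :
    ‖(z - (starRingEnd ℂ) q) / (1 - q * z)‖ < 1 := by
  have h0 := aux_one_sub_ne hq hz.le
  rw [norm_div, div_lt_one (norm_pos_iff.mpr h0)]
  have h1 := aux_normSq_id q z
  have h2 : 0 < (1 - ‖z‖ ^ 2) * (1 - ‖q‖ ^ 2) := by
    apply mul_pos <;> nlinarith [norm_nonneg q, norm_nonneg z]
  exact lt_of_pow_lt_pow_left₀ 2 (norm_nonneg _) (by linarith)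

lemma aux_image_ball {F : ℂ → ℂ} {A q c : ℂ} (hA : A ≠ 0) (hq : ‖q‖ < 1)
    (hF : ∀ z ∈ Metric.ball (0:ℂ) 1, F z = c + A * (z / (1 - q * z))) :
    ∃ (c : ℂ) (r : ℝ), 0 < r ∧ F '' Metric.ball 0 1 = Metric.ball c r := by
  have hs : (0:ℝ) < 1 - ‖q‖ ^ 2 := by nlinarith [norm_nonneg q]
  have hsC : ((1 - ‖q‖ ^ 2 : ℝ) : ℂ) = 1 - q * (starRingEnd ℂ) q := by
    rw [Complex.mul_conj, Complex.normSq_eq_norm_sq]; push_cast; ring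
  set s : ℝ := 1 - ‖q‖ ^ 2 with hsdef
  have hs0 : (s : ℂ) ≠ 0 := by exact_mod_cast hs.ne'
  have key : ∀ z ∈ Metric.ball (0:ℂ) 1, F z - (c + A * (starRingEnd ℂ) q / s) =
      (A / s) * ((z - (starRingEnd ℂ) q) / (1 - q * z)) := by
    intro z hz
    have h0 := aux_one_sub_ne hq (mem_ball_zero_iff.mp hz).le
    rw [hF z hz]
    obtain ⟨d, hd⟩ : ∃ d, d = 1 - q * z := ⟨_, rfl⟩
    rw [← hd] at h0 ⊢
    field_simp
    rw [hsC, hd]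
    ring
  have hnorm : ‖A / (s:ℂ)‖ = ‖A‖ / s := by
    rw [norm_div, Complex.norm_real, Real.norm_of_nonneg hs.le]
  have hAs : 0 < ‖A‖ / s := div_pos (norm_pos_iff.mpr hA) hs
  refine ⟨c + A * (starRingEnd ℂ) q / s, ‖A‖ / s, hAs, ?_⟩
  ext w
  constructor
  · rintro ⟨z, hz, rfl⟩
    rw [mem_ball_iff_norm, key z hz, norm_mul, hnorm]
    exact mul_lt_of_lt_one_right hAs (aux_mob_lt hq (mem_ball_zero_iff.mp hz))
  · intro hw
    rw [mem_ball_iff_norm] at hw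
    set ζ : ℂ := (w - (c + A * (starRingEnd ℂ) q / s)) / (A / s) with hζ
    have hAs0 : A / (s:ℂ) ≠ 0 := div_ne_zero hA hs0
    have hζ1 : ‖ζ‖ < 1 := by
      rw [hζ, norm_div, hnorm, div_lt_one hAs]; exact hw
    have hden : 1 + q * ζ ≠ 0 := by
      have := aux_one_sub_ne (q := -q) (z := ζ) (by simpa using hq) hζ1.le
      simpa using this
    have hz : (ζ + (starRingEnd ℂ) q) / (1 + q * ζ) ∈ Metric.ball (0:ℂ) 1 := by
      have := aux_mob_lt (q := -q) (z := ζ) (by simpa using hq) hζ1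
      simpa using this
    refine ⟨_, hz, ?_⟩
    have h1 := key _ hz
    have hd := aux_one_sub_ne hq (mem_ball_zero_iff.mp hz).le
    have h2 : ((ζ + (starRingEnd ℂ) q) / (1 + q * ζ) - (starRingEnd ℂ) q) =
        ζ * (1 - q * ((ζ + (starRingEnd ℂ) q) / (1 + q * ζ))) := by
      obtain ⟨d, hd⟩ : ∃ d, d = 1 + q * ζ := ⟨_, rfl⟩
      rw [← hd] at hden ⊢
      field_simp
      rw [hd]
      ring
    rw [h2, mul_div_cancel_right₀ _ hd, hζ, mul_div_cancel₀ _ hAs0] at h1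
    exact sub_left_inj.mp h1

lemma aux_geom {κ q : ℂ} (hq : ‖q‖ < 1) :
    ∀ z ∈ Metric.ball (0:ℂ) 1, HasSum (fun n => κ * q ^ n * z ^ n) (κ / (1 - q * z)) := by
  intro z hz
  have h1 : ‖q * z‖ < 1 := by
    rw [norm_mul]
    have := mem_ball_zero_iff.mp hz
    nlinarith [norm_nonneg q, norm_nonneg z]
  have := (hasSum_geometric_of_norm_lt_one h1).mul_left κ
  simpa [mul_pow, mul_assoc, div_eq_mul_inv] using this

lemma aux_forward {h G : ℂ → ℂ} (hh : DifferentiableOn ℂ h (Metric.ball 0 1))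
    (hhc : ContinuousOn h (Metric.closedBall 0 1)) (h0 : ∀ z ∈ Metric.ball (0:ℂ) 1, h z ≠ 0)
    (hG : DifferentiableOn ℂ G (Metric.ball 0 1))
    (hGc : ContinuousOn G (Metric.closedBall 0 1)) (hGne : ∃ z ∈ Metric.ball (0:ℂ) 1, G z ≠ 0)
    (heq : ∫ z in Metric.ball (0 : ℂ) 1, ‖G z‖^2 * ‖h z‖^2
      = (1/2) * Real.sqrt ((∫ z in Metric.ball (0 : ℂ) 1, ‖h z‖^2) / π) *
        ∫ φ in (0:ℝ)..(2*π),
          ‖G (Complex.exp (φ * Complex.I))‖^2 * ‖h (Complex.exp (φ * Complex.I))‖) :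
    (∃ k : ℂ, ∀ z ∈ Metric.ball (0:ℂ) 1, G z = k) ∧
      ∃ κ q : ℂ, κ ≠ 0 ∧ ‖q‖ < 1 ∧ ∀ z ∈ Metric.ball (0:ℂ) 1, h z = κ / (1 - q * z) ^ 2 := by
  obtain ⟨f, hf, hf2⟩ := aux_sqrt hh h0
  have hI : ∀ {g : ℂ → ℝ}, ContinuousOn g (Metric.closedBall 0 1) →
      IntegrableOn g (Metric.ball 0 1) := fun hg =>
    (hg.integrableOn_compact (isCompact_closedBall _ _)).mono_set Metric.ball_subset_closedBall
  have hw : DifferentiableOn ℂ (fun z => G z * f z) (Metric.ball 0 1) := hG.mul hf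
  have hfn : ∀ z ∈ Metric.ball (0:ℂ) 1, ‖f z‖ ^ 2 = ‖h z‖ := by
    intro z hz; rw [← norm_pow, hf2 z hz]
  obtain ⟨a, ha⟩ := aux_taylor hw
  have hS := aux_boundary (K := fun z => ‖G z‖ ^ 2 * ‖h z‖) ha ((hGc.norm.pow 2).mul hhc.norm)
    (fun z hz => by rw [norm_mul, mul_pow, hfn z hz])
  set B := ∫ φ in (0:ℝ)..(2*π),
          ‖G (Complex.exp (φ * Complex.I))‖^2 * ‖h (Complex.exp (φ * Complex.I))‖ with hB
  set A := ∫ z in Metric.ball (0 : ℂ) 1, ‖h z‖^2 with hA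
  set I := ∫ z in Metric.ball (0 : ℂ) 1, ‖G z‖^2 * ‖h z‖^2 with hIdef
  set X := ∫ z in Metric.ball (0 : ℂ) 1, (‖G z‖^2 * ‖h z‖)^2 with hX
  have hwX : EqOn (fun z => ‖(G z * f z) ^ 2‖ ^ 2) (fun z => (‖G z‖^2 * ‖h z‖)^2)
      (Metric.ball (0:ℂ) 1) := by
    intro z hz
    simp only [mul_pow, norm_mul, hf2 z hz, norm_pow]
  have hXi : IntegrableOn (fun z => (‖G z‖^2 * ‖h z‖)^2) (Metric.ball (0:ℂ) 1) :=
    hI (((hGc.norm.pow 2).mul hhc.norm).pow 2)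
  have hwi : IntegrableOn (fun z => ‖(G z * f z) ^ 2‖ ^ 2) (Metric.ball (0:ℂ) 1) :=
    hXi.congr_fun hwX.symm measurableSet_ball
  have hXeq : ∫ z in Metric.ball (0:ℂ) 1, ‖(G z * f z) ^ 2‖ ^ 2 = X :=
    setIntegral_congr_fun measurableSet_ball hwX
  have hle := aux_carleman_le hw.continuousOn ha hwi hS
  rw [hXeq] at hle
  have hA0 : 0 ≤ A := integral_nonneg fun z => by positivity
  have hAi : IntegrableOn (fun z => ‖h z‖^2) (Metric.ball (0:ℂ) 1) := hI (hhc.norm.pow 2)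
  have hIi : IntegrableOn (fun z => ‖G z‖^2 * ‖h z‖^2) (Metric.ball (0:ℂ) 1) :=
    hI ((hGc.norm.pow 2).mul (hhc.norm.pow 2))
  have hzero : ∀ {g : ℂ → ℝ}, ContinuousOn g (Metric.closedBall 0 1) →
      (∫ z in Metric.ball (0:ℂ) 1, g z ^ 2) = 0 → ∀ z ∈ Metric.ball (0:ℂ) 1, g z = 0 := by
    intro g hg hg0 
    have h1 := (setIntegral_eq_zero_iff_of_nonneg_ae
      (Filter.Eventually.of_forall fun z => sq_nonneg _) (hI (hg.pow 2))).mp hg0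
    have h2 := Measure.eqOn_open_of_ae_eq h1 Metric.isOpen_ball
      ((hg.pow 2).mono Metric.ball_subset_closedBall) continuousOn_const
    intro z hz
    exact pow_eq_zero_iff (two_ne_zero) |>.mp (h2 hz)
  have hApos : A ≠ 0 := by
    intro hA'
    have := hzero hhc.norm hA' 0 (by simp)
    exact h0 0 (by simp) (norm_eq_zero.mp this)
  have hI2 : I ^ 2 = A * (B ^ 2 / (4 * π)) := by
    rw [heq, mul_pow, mul_pow, Real.sq_sqrt (by positivity)]
    field_simp
    ring
  have hX2 : π * ((2 * π)⁻¹ * B) ^ 2 = B ^ 2 / (4 * π) := by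
    have := pi_pos.ne'
    field_simp
    ring
  rw [hX2] at hle
  have hsq : ∫ z in Metric.ball (0:ℂ) 1, (A * (‖G z‖^2 * ‖h z‖) - I * ‖h z‖) ^ 2 =
      A * (A * X - I ^ 2) := by
    have e : ∀ z, (A * (‖G z‖^2 * ‖h z‖) - I * ‖h z‖) ^ 2 =
        A ^ 2 * (‖G z‖^2 * ‖h z‖) ^ 2 - 2 * A * I * (‖G z‖^2 * ‖h z‖^2) + I ^ 2 * ‖h z‖^2 := by
      intro z; ring
    simp_rw [e]
    rw [integral_add, integral_sub, integral_const_mul, integral_const_mul, integral_const_mul]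
    · rw [← hA, ← hIdef, ← hX]; ring
    · exact hXi.const_mul _
    · exact hIi.const_mul _
    · exact (hXi.const_mul _).sub (hIi.const_mul _)
    · exact hAi.const_mul _
  have hge : 0 ≤ A * (A * X - I ^ 2) := by
    rw [← hsq]; exact integral_nonneg fun z => by positivity
  have hApos' : 0 < A := lt_of_le_of_ne hA0 hApos.symm
  have hAX : A * X - I ^ 2 = 0 := by
    apply le_antisymm
    · rw [hI2, ← mul_sub]
      exact mul_nonpos_of_nonneg_of_nonpos hA0 (by linarith)
    · exact nonneg_of_mul_nonneg_right hge hApos'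
  rw [hAX, mul_zero] at hsq
  have hG1 := hzero ((continuousOn_const.mul ((hGc.norm.pow 2).mul hhc.norm)).sub
    (continuousOn_const.mul hhc.norm)) hsq
  have hG2 : ∀ z ∈ Metric.ball (0:ℂ) 1, ‖G z‖ ^ 2 = I / A := by
    intro z hz
    have h1 := hG1 z hz
    have h2 : ‖h z‖ ≠ 0 := norm_ne_zero_iff.mpr (h0 z hz)
    have h3 : (A * ‖G z‖ ^ 2 - I) * ‖h z‖ = 0 := by
      simp only [Pi.mul_apply, Pi.sub_apply, Pi.pow_apply] at h1
      linarith
    have h4 := (mul_eq_zero.mp h3).resolve_right h2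
    field_simp
    linarith
  have hball0 : (0:ℂ) ∈ Metric.ball (0:ℂ) 1 := by simp
  have hGk : ∀ z ∈ Metric.ball (0:ℂ) 1, G z = G 0 := by
    have := Complex.eqOn_of_isPreconnected_of_isMaxOn_norm (f := G)
      (convex_ball (0:ℂ) 1).isPreconnected Metric.isOpen_ball hG hball0 (by
        intro z hz
        have : ‖G z‖ ^ 2 = ‖G 0‖ ^ 2 := by rw [hG2 z hz, hG2 0 hball0]
        exact ((pow_left_inj₀ (norm_nonneg _) (norm_nonneg _) two_ne_zero).mp this).le)
    exact fun z hz => this hz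
  have hk : G 0 ≠ 0 := by
    obtain ⟨z, hz, hz0⟩ := hGne
    rwa [hGk z hz] at hz0
  refine ⟨⟨G 0, hGk⟩, ?_⟩
  have hXX : X = B ^ 2 / (4 * π) := by
    apply mul_left_cancel₀ hApos
    linarith
  have hrec := aux_carleman_eq hw.continuousOn ha hwi hS (by rw [hXeq, hXX, hX2])
  have ha0 : a 0 = G 0 * f 0 := by
    have h1 := ha 0 hball0
    have h2 := hasSum_single (f := fun n => a n * (0:ℂ) ^ n) 0 (fun n hn => by simp [hn])
    simpa using h2.unique h1
  have hf0 : f 0 ≠ 0 := by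
    intro h'
    have := hf2 0 hball0
    rw [h'] at this
    exact h0 0 hball0 (by rw [← this]; simp)
  have ha0' : a 0 ≠ 0 := by rw [ha0]; exact mul_ne_zero hk hf0
  set q := a 1 / a 0 with hq
  have han : ∀ n, a n = a 0 * q ^ n := by
    intro n
    induction n with
    | zero => simp
    | succ n ih =>
      have := hrec n
      apply mul_left_cancel₀ ha0'
      have hq' : a 0 * q = a 1 := by rw [hq]; field_simp
      rw [this, ih, pow_succ, ← hq']
      ring
  have hq1 : ‖q‖ < 1 := by
    have h1 := hS.summable
    have h2 : Summable (fun n : ℕ => (‖q‖ ^ 2) ^ n) := by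
      have h3 := h1.mul_left ((‖a 0‖ ^ 2)⁻¹)
      refine h3.congr fun n => ?_
      have : ‖a 0‖ ≠ 0 := norm_ne_zero_iff.mpr ha0'
      rw [han n, norm_mul, mul_pow, norm_pow]
      field_simp
      ring
    have h4 := summable_geometric_iff_norm_lt_one.mp h2
    rw [Real.norm_of_nonneg (by positivity)] at h4
    exact (sq_lt_one_iff₀ (norm_nonneg _)).mp h4
  refine ⟨(a 0 / G 0) ^ 2, q, pow_ne_zero _ (div_ne_zero ha0' hk), hq1, fun z hz => ?_⟩
  have h1 := ha z hz
  have h2 := aux_geom (κ := a 0) hq1 z hz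
  have e : (fun n => a n * z ^ n) = fun n => a 0 * q ^ n * z ^ n := by
    funext n; rw [← han n]
  rw [e] at h1
  have h3 := h1.unique h2
  rw [hGk z hz] at h3
  have h4 := aux_one_sub_ne hq1 (mem_ball_zero_iff.mp hz).le
  have h5 : f z = a 0 / G 0 / (1 - q * z) := by
    rw [eq_div_iff h4] at h3 ⊢
    rw [eq_div_iff hk, ← h3]
    ring
  rw [← hf2 z hz, h5, div_pow]

lemma aux_back (F : ℂ → ℂ) (U : Set ℂ) (hU : IsOpen U)
    (hUD : Metric.closedBall (0 : ℂ) 1 ⊆ U)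
    (hF : DifferentiableOn ℂ F U)
    (hFinj : Set.InjOn F (Metric.closedBall (0 : ℂ) 1)) {c : ℂ} {r : ℝ} (hr : 0 < r)
    (him : F '' (Metric.ball (0 : ℂ) 1) = Metric.ball c r)
    (hder : ∀ z ∈ Metric.ball (0:ℂ) 1, deriv F z ≠ 0) :
    (∫ z in Metric.ball (0 : ℂ) 1, ‖deriv F z‖^2) = π * r ^ 2 ∧
      ∫ φ in (0:ℝ)..(2*π), ‖deriv F (Complex.exp (φ * Complex.I))‖ = 2 * π * r := by
  have hbc : Metric.ball (0:ℂ) 1 ⊆ Metric.closedBall 0 1 := Metric.ball_subset_closedBall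
  have hcl : closure (Metric.ball (0:ℂ) 1) = Metric.closedBall 0 1 := closure_ball _ one_ne_zero
  have hFc : ContinuousOn F (Metric.closedBall 0 1) := hF.continuousOn.mono hUD
  have hsph : ∀ z ∈ Metric.sphere (0:ℂ) 1, ‖F z - c‖ = r := by
    intro z hz
    have hz' := Metric.sphere_subset_closedBall hz
    apply le_antisymm
    · have h1 : F z ∈ closure (F '' (Metric.ball (0:ℂ) 1)) := by
        apply ContinuousOn.image_closure (by rwa [hcl])
        exact ⟨z, by rwa [hcl], rfl⟩
      rw [him, closure_ball _ hr.ne', mem_closedBall_iff_norm] at h1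
      exact h1
    · by_contra hlt
      push Not at hlt
      have h1 : F z ∈ F '' (Metric.ball (0:ℂ) 1) := by
        rw [him, mem_ball_iff_norm]; exact hlt
      obtain ⟨w, hw, hwz⟩ := h1
      have := hFinj (hbc hw) hz' hwz
      subst this
      rw [mem_ball_zero_iff] at hw
      rw [mem_sphere_zero_iff_norm] at hz
      linarith
  obtain ⟨a, haB, hac⟩ : ∃ a ∈ Metric.ball (0:ℂ) 1, F a = c := by
    have : c ∈ F '' (Metric.ball (0:ℂ) 1) := by rw [him]; simpa using hr
    exact this
  have ha1 : ‖a‖ < 1 := mem_ball_zero_iff.mp haB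
  set q := (starRingEnd ℂ) a with hq
  have hq1 : ‖q‖ < 1 := by rw [hq, RCLike.norm_conj]; exact ha1
  have hqa : (starRingEnd ℂ) q = a := by simp [hq]
  have hne : ∀ z ∈ Metric.closedBall (0:ℂ) 1, 1 - q * z ≠ 0 := fun z hz =>
    aux_one_sub_ne hq1 (mem_closedBall_zero_iff.mp hz)
  set Q : ℂ → ℂ := fun z => dslope F a z * (1 - q * z) with hQ
  have hQd : DifferentiableOn ℂ Q U := by
    refine DifferentiableOn.mul ?_ (by fun_prop)
    exact (Complex.differentiableOn_dslope (hU.mem_nhds (hUD (hbc haB)))).mpr hF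
  have hdsl : ∀ z, z ≠ a → dslope F a z * (z - a) = F z - c := by
    intro z hz
    rw [dslope_of_ne _ hz, slope_def_field, hac]
    have := sub_ne_zero.mpr hz
    field_simp
  have hQ0 : ∀ z ∈ Metric.closedBall (0:ℂ) 1, Q z ≠ 0 := by
    intro z hz
    refine mul_ne_zero ?_ (hne z hz)
    by_cases hza : z = a
    · rw [hza, dslope_same]; exact hder a haB
    · intro h0
      have := hdsl z hza
      rw [h0, zero_mul, eq_comm, sub_eq_zero, ← hac] at this
      exact hza (hFinj hz (hbc haB) this)
  have hQs : ∀ z ∈ Metric.sphere (0:ℂ) 1, ‖Q z‖ = r := by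
    intro z hz
    have hz1 : ‖z‖ = 1 := mem_sphere_zero_iff_norm.mp hz
    have hza : z ≠ a := by rintro rfl; linarith
    have h1 := aux_normSq_id q z
    rw [hqa, hz1] at h1
    have h2 : ‖1 - q * z‖ = ‖z - a‖ := by
      rw [← pow_left_inj₀ (norm_nonneg _) (norm_nonneg _) two_ne_zero]
      linarith
    rw [hQ]
    simp only
    rw [norm_mul, h2, ← norm_mul, hdsl z hza, hsph z hz]
  have hfr : frontier (Metric.ball (0:ℂ) 1) = Metric.sphere 0 1 := frontier_ball _ one_ne_zero
  have hQD : DiffContOnCl ℂ Q (Metric.ball 0 1) :=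
    DifferentiableOn.diffContOnCl (by rw [hcl]; exact hQd.mono hUD)
  have hQn : ∀ z ∈ Metric.ball (0:ℂ) 1, ‖Q z‖ = r := by
    intro z hz
    have hz' : z ∈ closure (Metric.ball (0:ℂ) 1) := subset_closure hz
    apply le_antisymm
    · exact Complex.norm_le_of_forall_mem_frontier_norm_le Metric.isBounded_ball hQD
        (fun w hw => (hQs w (hfr ▸ hw)).le) hz'
    · have := Complex.norm_le_of_forall_mem_frontier_norm_le Metric.isBounded_ball
        (hQD.inv (by rw [hcl]; exact hQ0)) (C := r⁻¹)
        (fun w hw => by rw [Pi.inv_apply, norm_inv, hQs w (hfr ▸ hw)]) hz'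
      rw [Pi.inv_apply, norm_inv] at this
      exact (inv_le_inv₀ (norm_pos_iff.mpr (hQ0 z (hbc hz))) hr).mp this
  have hball0 : (0:ℂ) ∈ Metric.ball (0:ℂ) 1 := by simp
  have hQk : ∀ z ∈ Metric.ball (0:ℂ) 1, Q z = Q 0 := by
    have := Complex.eqOn_of_isPreconnected_of_isMaxOn_norm (f := Q)
      (convex_ball (0:ℂ) 1).isPreconnected Metric.isOpen_ball (hQd.mono (hbc.trans hUD)) hball0 (by
        intro z hz
        exact ((hQn z hz).trans (hQn 0 hball0).symm).le)
    exact fun z hz => this hz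
  have hFz : ∀ z ∈ Metric.ball (0:ℂ) 1, F z = c + Q 0 * ((z - a) / (1 - q * z)) := by
    intro z hz
    have h1 := hne z (hbc hz)
    by_cases hza : z = a
    · rw [hza, hac]; simp
    · rw [← hQk z hz, mul_div_assoc', hQ]
      simp only
      rw [mul_right_comm, hdsl z hza, mul_div_cancel_right₀ _ h1]
      ring
  have hs : (0:ℝ) < 1 - ‖a‖ ^ 2 := by nlinarith [norm_nonneg a]
  have hsC : ((1 - ‖a‖ ^ 2 : ℝ) : ℂ) = 1 - q * a := by
    rw [mul_comm, hq, Complex.mul_conj, Complex.normSq_eq_norm_sq]; push_cast; ring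
  have hdF : ∀ z ∈ Metric.ball (0:ℂ) 1,
      deriv F z = Q 0 * ((1 - ‖a‖ ^ 2 : ℝ) : ℂ) / (1 - q * z) ^ 2 := by
    intro z hz
    have h1 := hne z (hbc hz)
    have h2 : HasDerivAt (fun z => c + Q 0 * ((z - a) / (1 - q * z)))
        (Q 0 * ((1 * (1 - q * z) - (z - a) * (-(q * 1))) / (1 - q * z) ^ 2)) z := by
      refine HasDerivAt.const_add c (HasDerivAt.const_mul (Q 0) ?_)
      exact ((hasDerivAt_id z).sub_const a).div (((hasDerivAt_id z).const_mul q).const_sub 1) h1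
    have h3 : F =ᶠ[nhds z] fun z => c + Q 0 * ((z - a) / (1 - q * z)) := by
      filter_upwards [Metric.isOpen_ball.mem_nhds hz] with w hw using hFz w hw
    rw [h3.deriv_eq, h2.deriv, hsC]
    ring
  set κ : ℂ := ((Real.sqrt (r * (1 - ‖a‖ ^ 2)) : ℝ) : ℂ) with hκ
  have hκn : ‖κ‖ ^ 2 = r * (1 - ‖a‖ ^ 2) := by
    rw [hκ, Complex.norm_real, Real.norm_of_nonneg (Real.sqrt_nonneg _), Real.sq_sqrt (by positivity)]
  have hfn : ∀ z ∈ Metric.ball (0:ℂ) 1, ‖κ / (1 - q * z)‖ ^ 2 = ‖deriv F z‖ := by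
    intro z hz
    rw [hdF z hz, norm_div, div_pow, hκn, norm_div, norm_mul, hQn 0 hball0, Complex.norm_real,
      Real.norm_of_nonneg hs.le, norm_pow]
  have hdc : ContinuousOn (deriv F) (Metric.closedBall 0 1) :=
    (hF.deriv hU).continuousOn.mono hUD
  have hser := aux_geom (κ := κ) hq1
  have hS1 := aux_boundary hser hdc.norm hfn
  have hS2 : HasSum (fun n : ℕ => ‖κ * q ^ n‖ ^ 2) r := by
    have h1 : ‖‖q‖ ^ 2‖ < 1 := by
      rw [Real.norm_of_nonneg (by positivity)]
      exact (sq_lt_one_iff₀ (norm_nonneg _)).mpr hq1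
    have h2 := (hasSum_geometric_of_norm_lt_one h1).mul_left (‖κ‖ ^ 2)
    have hqn : ‖q‖ = ‖a‖ := by rw [hq, RCLike.norm_conj]
    rw [hκn, hqn, mul_assoc, mul_inv_cancel₀ hs.ne', mul_one] at h2
    have e : (fun n : ℕ => ‖κ * q ^ n‖ ^ 2)
        = fun n : ℕ => r * (1 - ‖a‖ ^ 2) * (‖a‖ ^ 2) ^ n := by
      funext n
      rw [norm_mul, norm_pow, mul_pow, hκn, hqn]
      ring
    rw [e]
    exact h2
  have hfc : ContinuousOn (fun z => κ / (1 - q * z)) (Metric.ball 0 1) :=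
    continuousOn_const.div (by fun_prop) (fun z hz => hne z (hbc hz))
  have hee : EqOn (fun z => ‖deriv F z‖ ^ 2) (fun z => ‖(κ / (1 - q * z)) ^ 2‖ ^ 2)
      (Metric.ball (0:ℂ) 1) := by
    intro z hz
    simp only
    rw [norm_pow, hfn z hz]
  constructor
  · rw [setIntegral_congr_fun measurableSet_ball hee]
    refine aux_carleman_geom hfc hser ?_ hS2
    refine IntegrableOn.congr_fun ?_ hee measurableSet_ball
    exact ((hdc.norm.pow 2).integrableOn_compact (isCompact_closedBall _ _)).mono_set hbc
  · have := hS1.unique hS2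
    rw [← this]
    have := pi_pos.ne'
    rw [mul_inv_cancel_left₀ (by positivity)]


/-- Equality case of Proposition 2.7 of the paper, stated via a conformal parametrization `F`
of `Ω` by the unit disk: equality holds if and only if `u` is constant on `Ω` and `Ω` is a
disk. -/
theorem stmt_4 (F : ℂ → ℂ) (U : Set ℂ) (hU : IsOpen U)
    (hUD : Metric.closedBall (0 : ℂ) 1 ⊆ U)
    (hF : DifferentiableOn ℂ F U)
    (hFinj : Set.InjOn F (Metric.closedBall (0 : ℂ) 1))
    (Ω : Set ℂ) (hΩ : Ω = F '' (Metric.ball (0 : ℂ) 1))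
    (u : ℂ → ℂ)
    (hu : DifferentiableOn ℂ u Ω)
    (hucont : ContinuousOn u (F '' (Metric.closedBall (0 : ℂ) 1)))
    (hune0 : ∃ z ∈ Ω, u z ≠ 0) :
    (∫ z in Metric.ball (0 : ℂ) 1, ‖u (F z)‖^2 * ‖deriv F z‖^2
      = (1/2) * Real.sqrt ((∫ z in Metric.ball (0 : ℂ) 1, ‖deriv F z‖^2) / π) *
        ∫ φ in (0:ℝ)..(2*π),
          ‖u (F (Complex.exp (φ * Complex.I)))‖^2 * ‖deriv F (Complex.exp (φ * Complex.I))‖)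
    ↔ ((∃ k : ℂ, ∀ z ∈ Ω, u z = k) ∧ ∃ (c : ℂ) (r : ℝ), 0 < r ∧ Ω = Metric.ball c r) := by
  have hbc : Metric.ball (0:ℂ) 1 ⊆ Metric.closedBall 0 1 := Metric.ball_subset_closedBall
  have hcl : closure (Metric.ball (0:ℂ) 1) = Metric.closedBall 0 1 := closure_ball _ one_ne_zero
  have hFc : ContinuousOn F (Metric.closedBall 0 1) := hF.continuousOn.mono hUD
  have hder : ∀ z ∈ Metric.ball (0:ℂ) 1, deriv F z ≠ 0 := fun z hz =>
    aux_deriv_ne_zero (Metric.isOpen_ball.mem_nhds hz)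
      (hF.analyticAt (hU.mem_nhds (hUD (hbc hz)))) (hFinj.mono hbc)
  have hh : DifferentiableOn ℂ (deriv F) U := hF.deriv hU
  subst hΩ
  have hGc : ContinuousOn (fun z => u (F z)) (Metric.closedBall 0 1) :=
    hucont.comp hFc (mapsTo_image _ _)
  constructor
  · intro heq
    obtain ⟨⟨k, hk⟩, κ, q, hκ, hq, hform⟩ := aux_forward (G := fun z => u (F z))
      (hh.mono (hbc.trans hUD)) (hh.continuousOn.mono hUD) hder
      (hu.comp (hF.mono (hbc.trans hUD)) (mapsTo_image _ _)) hGc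
      (by obtain ⟨_, ⟨z, hz, rfl⟩, h⟩ := hune0; exact ⟨z, hz, h⟩) heq
    refine ⟨⟨k, by rintro _ ⟨z, hz, rfl⟩; exact hk z hz⟩, ?_⟩
    refine aux_image_ball (c := F 0) (A := κ) (q := q) hκ hq ?_
    have hd : ∀ z ∈ Metric.ball (0:ℂ) 1,
        HasDerivAt (fun z => F z - κ * (z / (1 - q * z))) 0 z := by
      intro z hz
      have h1 := aux_one_sub_ne hq (mem_ball_zero_iff.mp hz).le
      have h2 : HasDerivAt (fun z => κ * (z / (1 - q * z)))
          (κ * ((1 * (1 - q * z) - z * (-(q * 1))) / (1 - q * z) ^ 2)) z := by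
        refine HasDerivAt.const_mul κ ?_
        exact (hasDerivAt_id z).div (((hasDerivAt_id z).const_mul q).const_sub 1) h1
      have h3 := (hF.differentiableAt (hU.mem_nhds (hUD (hbc hz)))).hasDerivAt
      have h4 := h3.sub h2
      have e : deriv F z - κ * ((1 * (1 - q * z) - z * (-(q * 1))) / (1 - q * z) ^ 2) = 0 := by
        rw [hform z hz]; ring
      rw [e] at h4
      exact h4
    intro z hz
    have := (convex_ball (0:ℂ) 1).is_const_of_fderivWithin_eq_zero (𝕜 := ℂ)
      (f := fun z => F z - κ * (z / (1 - q * z)))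
      (fun z hz => (hd z hz).differentiableAt.differentiableWithinAt) (fun z hz => by
        rw [fderivWithin_of_isOpen Metric.isOpen_ball hz, (hd z hz).hasFDerivAt.fderiv]
        ext; simp) hz (Metric.mem_ball_self one_pos)
    simp only [zero_div, mul_zero, sub_zero] at this
    rw [← this]; ring
  · rintro ⟨⟨k, hk⟩, c, r, hr, him⟩
    obtain ⟨hA, hB⟩ := aux_back F U hU hUD hF hFinj hr him hder
    have hk' : ∀ z ∈ Metric.closedBall (0:ℂ) 1, u (F z) = k := by
      have h1 : EqOn (fun z => u (F z)) (fun _ => k) (Metric.ball (0:ℂ) 1) :=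
        fun z hz => hk _ ⟨z, hz, rfl⟩
      have h2 := h1.of_subset_closure hGc continuousOn_const hbc hcl.ge
      exact fun z hz => h2 hz
    have e1 : ∫ z in Metric.ball (0 : ℂ) 1, ‖u (F z)‖^2 * ‖deriv F z‖^2 = ‖k‖ ^ 2 * (π * r ^ 2) := by
      rw [← hA, ← integral_const_mul]
      refine setIntegral_congr_fun measurableSet_ball fun z hz => ?_
      rw [hk' z (hbc hz)]
    have e2 : ∫ φ in (0:ℝ)..(2*π),
          ‖u (F (Complex.exp (φ * Complex.I)))‖^2 * ‖deriv F (Complex.exp (φ * Complex.I))‖ =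
          ‖k‖ ^ 2 * (2 * π * r) := by
      rw [← hB, ← intervalIntegral.integral_const_mul]
      congr 1
      ext φ
      rw [hk' _ (by simp [Complex.norm_exp_ofReal_mul_I])]
    rw [e1, e2, hA, mul_div_cancel_left₀ _ pi_pos.ne', Real.sqrt_sq hr.le]
    ring
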